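/- Let ψ = ψ_cyl be the cylinder potential, J the associated almost complex structure on ℝ × ℝ × ℂ × ℂ^{n−1}, and fix t = (t₁, …, t_{n−1}) ∈ ℝ^{n−1}. Let u = (a, b, h₀, h₁, …, h_{n−1}) : 𝔻 → ℝ × ℝ × ℂ × ℂ^{n−1} be continuous on the closed unit disc, J-holomorphic on the open unit disc, and satisfy the boundary condition u(∂𝔻) ⊆ L^t (i.e. on ∂𝔻 one has a = 0, |h₀| = 1 and Im h_j = t_j for j = 1, …, n−1). Assume moreover that the restriction of h₀ to the unit circle is injective and that h₀(1) = 1, h₀(i) = i, h₀(−1) = −1. Then u is a standard disc: there exist s ∈ ℝ^{n−1} and b₀ ∈ ℝ such that a(w) = (|w|² − 1)/4 for all w ∈ 𝔻, b is constant equal to b₀, h₀(w) = w for all w ∈ 𝔻, and h_j is constant equal to s_j + i·t_j for j = 1, …, n−1; that is, u = u^t_{s,b₀}. -/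

import Mathlib

/-!
The proof separates the `J`-holomorphic equation into ordinary Cauchy-Riemann equations.

The `ℂ × ℂ^m` component `h` is holomorphic, and `(a - ψ ∘ h) + i b` is holomorphic as well. On the
circle `Im h_j = t_j` and `a - ψ ∘ h = -1/4 - ½ Σ t_j²`, so `eq_const_of_re_const_on_sphere` shows
that each `h_j` with `j ≥ 1`, the function `a - ψ ∘ h` and `b` are constant. Once `h₀` is known to
be the identity, this gives `a = (|w|² - 1)/4`.

That `h₀` is the identity is `eqOn_id_of_unimodular_boundary`. Instead of factoring `h₀` as a finite
Blaschke product and counting its degree, consider the Cayley transform `F = (1 + h₀)/(1 - h₀)`.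
By injectivity on the circle, `h₀ = 1` only at the point `1`, so `Re F` is a nonnegative harmonic
function vanishing on the circle except at `1`. Such a function is a multiple of the Poisson kernel
`Re ((1 + z)/(1 - z))` (`re_eq_mul_poisson_of_re_eq_zero_off_one`), hence
`F = l (1 + z)/(1 - z) + k` with constants `l`, `k`, and the values at `-1` and `i` give `F = Q` with
`Q = (1 + z)/(1 - z)`, that is, `h₀ z = z`.
-/


open Complex Metric

/-- The cylinder potential `ψ_cyl(z₀, z₁, …, z_{n−1}) = |z₀|²/4 + ½·Σ_j (Im z_j)²`
on `ℂ × ℂ^{n−1}` (here `m = n − 1`). -/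
noncomputable def psiCyl (m : ℕ) (z : ℂ × (Fin m → ℂ)) : ℝ :=
  Complex.normSq z.1 / 4 + (1 / 2) * ∑ j, (z.2 j).im ^ 2

/-- The associated almost complex structure `J` on `ℝ × ℝ × (ℂ × ℂ^{n−1})`:
`J_z (α, β, v) = (dψ_z(i·v) − β, α − dψ_z(v), i·v)`. -/
noncomputable def Jcyl (m : ℕ) (z : ℂ × (Fin m → ℂ))
    (q : ℝ × ℝ × (ℂ × (Fin m → ℂ))) : ℝ × ℝ × (ℂ × (Fin m → ℂ)) :=
  (fderiv ℝ (psiCyl m) z (Complex.I • q.2.2) - q.2.1,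
   q.1 - fderiv ℝ (psiCyl m) z q.2.2,
   Complex.I • q.2.2)

/-! ### Holomorphic functions with constant real part on the circle -/

/-- The maximum principle for `exp f` and `exp (-f)` makes `Re f` constant on the disc, hence `f`
constant. -/
theorem eq_const_of_re_const_on_sphere {f : ℂ → ℂ} {c : ℝ}
    (hf : DiffContOnCl ℂ f (ball 0 1)) (hc : ∀ z : ℂ, ‖z‖ = 1 → (f z).re = c) :
    ∃ k, ∀ z ∈ closedBall (0 : ℂ) 1, f z = k := by
  have hcl : closure (ball (0 : ℂ) 1) = closedBall 0 1 := closure_ball 0 one_ne_zero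
  have hfr : ∀ z ∈ frontier (ball (0 : ℂ) 1), ‖z‖ = 1 := by
    intro z hz
    simpa [frontier_ball (0 : ℂ) one_ne_zero] using hz
  have hre : ∀ z ∈ ball (0 : ℂ) 1, (f z).re = c := by
    intro z hz
    have hz' := subset_closure hz
    have h1 := Complex.norm_le_of_forall_mem_frontier_norm_le (C := Real.exp c) isBounded_ball
      (f := fun z => Complex.exp (f z))
      (Complex.differentiable_exp.comp_diffContOnCl hf)
      (fun x hx => by simp [Complex.norm_exp, hc x (hfr x hx)]) hz'
    have h2 := Complex.norm_le_of_forall_mem_frontier_norm_le (C := Real.exp (-c)) isBounded_ball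
      (f := fun z => Complex.exp (-f z))
      (Complex.differentiable_exp.comp_diffContOnCl hf.neg)
      (fun x hx => by simp [Complex.norm_exp, hc x (hfr x hx)]) hz'
    simp only [Complex.norm_exp, Real.exp_le_exp, neg_re] at h1 h2
    linarith
  obtain ⟨k, hk⟩ := (hf.differentiableOn.analyticOnNhd isOpen_ball).eq_const_of_re_eq_const hre
    isOpen_ball ⟨⟨0, by simp⟩, (convex_ball (0 : ℂ) 1).isPreconnected⟩
  refine ⟨k, fun z hz => ?_⟩
  exact Set.EqOn.of_subset_closure (f := f) (g := fun _ => k) hk (hcl ▸ hf.continuousOn)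
    continuousOn_const ball_subset_closedBall hcl.ge hz

/-! ### Positive harmonic functions vanishing on the circle minus a point -/

/-- If the Poisson kernel at `w` is within `ε` of `c`, weighted by `Re G` and up to an error `η`,
then `Re G w` is within `ε * Re G 0 + η` of `c * Re G 0`: average the bound over the circle, using
the Poisson formula for `G w` and the mean value property for `G 0`. -/
theorem abs_re_sub_le_of_kernel_bound {G : ℂ → ℂ} (hG : DiffContOnCl ℂ G (ball 0 1))
    {w : ℂ} (hw : w ∈ ball (0 : ℂ) 1) {c ε η : ℝ}
    (h : ∀ z : ℂ, ‖z‖ = 1 →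
      |(((z + w) / (z - w)).re - c) * (G z).re| ≤ ε * (G z).re + η) :
    |(G w).re - c * (G 0).re| ≤ ε * (G 0).re + η := by
  have hGc : ContinuousOn G (sphere 0 1) :=
    hG.continuousOn_ball.mono sphere_subset_closedBall
  have hGi : CircleIntegrable G 0 1 := hGc.circleIntegrable zero_le_one
  have hne : ∀ z ∈ sphere (0 : ℂ) 1, z - w ≠ 0 := by
    intro z hz h0
    rw [sub_eq_zero.1 h0, mem_sphere_zero_iff_norm] at hz
    rw [mem_ball_zero_iff] at hw
    linarith
  have hP : ContinuousOn (fun z => ((z + w) / (z - w)).re) (sphere 0 1) :=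
    Complex.continuous_re.comp_continuousOn
      (ContinuousOn.div (by fun_prop) (by fun_prop) hne)
  have hGr : ContinuousOn (fun z => (G z).re) (sphere 0 1) :=
    Complex.continuous_re.comp_continuousOn hGc
  have hPG : CircleIntegrable (fun z => ((z + w) / (z - w)).re • G z) 0 1 :=
    (hP.smul hGc).circleIntegrable zero_le_one
  have hmean : Real.circleAverage G 0 1 = G 0 :=
    DiffContOnCl.circleAverage (by simpa using hG)
  have hpois : Real.circleAverage (fun z => ((z + w) / (z - w)).re • G z) 0 1 = G w := by
    simpa using hG.circleAverage_re_herglotzRieszKernel_smul' hw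
  have e1 : Real.circleAverage (fun z => ((z + w) / (z - w)).re * (G z).re) 0 1 = (G w).re := by
    have := Complex.reCLM.circleAverage_comp_comm hPG
    rw [hpois] at this
    simpa [Function.comp_def] using this
  have e2 : Real.circleAverage (fun z => (G z).re) 0 1 = (G 0).re := by
    have := Complex.reCLM.circleAverage_comp_comm hGi
    rw [hmean] at this
    simpa [Function.comp_def] using this
  have iPr : CircleIntegrable (fun z => ((z + w) / (z - w)).re * (G z).re) 0 1 :=
    (hP.mul hGr).circleIntegrable zero_le_one
  have iGr : ∀ a : ℝ, CircleIntegrable (fun z => a * (G z).re) 0 1 := fun a =>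
    (continuousOn_const.mul hGr).circleIntegrable zero_le_one
  have e2' : ∀ a : ℝ, Real.circleAverage (fun z => a * (G z).re) 0 1 = a * (G 0).re := by
    intro a
    rw [← e2]
    exact Real.circleAverage_fun_smul (𝕜 := ℝ) (a := a) (f := fun z => (G z).re)
  have e3 : Real.circleAverage (fun z => (((z + w) / (z - w)).re - c) * (G z).re) 0 1
      = (G w).re - c * (G 0).re := by
    simp_rw [sub_mul]
    rw [Real.circleAverage_fun_sub iPr (iGr c), e1, e2']
  have e4 : Real.circleAverage (fun z => ε * (G z).re + η) 0 1 = ε * (G 0).re + η := by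
    rw [Real.circleAverage_fun_add (iGr ε) (circleIntegrable_const η 0 1), e2',
      Real.circleAverage_const]
  rw [← e3, ← e4]
  refine Real.abs_circleAverage_le_circleAverage_abs.trans ?_
  refine Real.circleAverage_mono ?_ ?_ ?_
  · exact ((hP.sub continuousOn_const).mul hGr).abs.circleIntegrable zero_le_one
  · exact ((continuousOn_const.mul hGr).add continuousOn_const).circleIntegrable zero_le_one
  · intro z hz
    exact h z (by simpa using hz)

/-- If `Re F ≥ 0` on the disc and `Re F = 0` on the circle minus `1`, then `Re F` is a multiple of
the Poisson kernel with pole at `1`. As `r → 1`, the measures `Re F (r z) |dz|` have constant mass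
and concentrate at `1`, so the Poisson integrals representing `Re F (r w)` converge to
`Re F 0` times the kernel at `1`. No behaviour of `F` at `1` is assumed. -/
theorem re_eq_mul_poisson_of_re_eq_zero_off_one {F : ℂ → ℂ}
    (hd : DifferentiableOn ℂ F (ball 0 1))
    (hc : ContinuousOn F (closedBall 0 1 \ {1}))
    (hpos : ∀ z ∈ ball (0 : ℂ) 1, 0 ≤ (F z).re)
    (hbd : ∀ z : ℂ, ‖z‖ = 1 → z ≠ 1 → (F z).re = 0)
    {w : ℂ} (hw : w ∈ ball (0 : ℂ) 1) :
    (F w).re = ((1 + w) / (1 - w)).re * (F 0).re := by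
  have hw1 : ‖w‖ < 1 := by simpa using hw
  set c := ((1 + w) / (1 - w)).re with hcdef
  have hne : ∀ z ∈ sphere (0 : ℂ) 1, z - w ≠ 0 := by
    intro z hz h0
    rw [sub_eq_zero.1 h0, mem_sphere_zero_iff_norm] at hz
    linarith
  have hP : ContinuousOn (fun z => ((z + w) / (z - w)).re - c) (sphere 0 1) :=
    (Complex.continuous_re.comp_continuousOn
      (ContinuousOn.div (by fun_prop) (by fun_prop) hne)).sub continuousOn_const
  obtain ⟨C₀, hC₀⟩ := (isCompact_sphere (0 : ℂ) 1).exists_bound_of_continuousOn hP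
  -- The maximum with `1` makes `C` positive, so that `τ / C` can be used below.
  set C := max C₀ 1
  have hC1 : 0 < C := lt_of_lt_of_le one_pos (le_max_right _ _)
  have hlim : Filter.Tendsto (fun r : ℝ => |(F (r * w)).re - c * (F 0).re|)
      (nhdsWithin 1 (Set.Iio 1)) (nhds |(F w).re - c * (F 0).re|) := by
    have h1 : ContinuousAt F w := (hd.differentiableAt (isOpen_ball.mem_nhds hw)).continuousAt
    have h2 : ContinuousAt (fun r : ℝ => F (r * w)) 1 :=
      ContinuousAt.comp (f := fun r : ℝ => (r : ℂ) * w) (g := F) (by simpa using h1)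
        (by fun_prop)
    have h3 : ContinuousAt (fun r : ℝ => |(F (r * w)).re - c * (F 0).re|) 1 :=
      ((Complex.continuous_re.continuousAt.comp h2).sub continuousAt_const).abs
    simpa using h3.tendsto.mono_left nhdsWithin_le_nhds
  have key : ∀ τ > 0, |(F w).re - c * (F 0).re| ≤ τ * (F 0).re + τ := by
    intro τ hτ
    refine le_of_tendsto hlim ?_
    obtain ⟨δ, hδ, hPδ⟩ := Metric.continuousOn_iff.1 hP 1 (by simp) τ hτ
    have hK : IsCompact (closedBall (0 : ℂ) 1 \ ball 1 (δ / 2)) :=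
      (isCompact_closedBall 0 1).diff isOpen_ball
    have hKu := hK.uniformContinuousOn_of_continuous (hc.mono (by
      intro z hz
      refine ⟨hz.1, fun h => hz.2 ?_⟩
      rw [Set.mem_singleton_iff.1 h]
      exact mem_ball_self (by positivity)))
    obtain ⟨ρ, hρ, hu⟩ := Metric.uniformContinuousOn_iff.1 hKu (τ / C) (by positivity)
    have hm : max (max (1 - ρ) (1 - δ / 2)) 0 < (1 : ℝ) := by
      simp [hρ, hδ]
    filter_upwards [Ioo_mem_nhdsLT hm] with r hr
    have hr0 : 0 < r := (le_max_right _ _).trans_lt hr.1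
    have hrρ : 1 - r < ρ := by
      have := ((le_max_left _ _).trans (le_max_left _ _)).trans_lt hr.1
      linarith
    have hrδ : 1 - r < δ / 2 := by
      have := ((le_max_right _ _).trans (le_max_left _ _)).trans_lt hr.1
      linarith
    have hr1 : r < 1 := hr.2
    have hmap : ∀ z ∈ closedBall (0 : ℂ) 1, (r : ℂ) * z ∈ ball (0 : ℂ) 1 := by
      intro z hz
      rw [mem_closedBall_zero_iff] at hz
      rw [mem_ball_zero_iff, norm_mul, Complex.norm_real, Real.norm_of_nonneg hr0.le]
      nlinarith [norm_nonneg z]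
    have hG : DiffContOnCl ℂ (fun z => F (r * z)) (ball 0 1) := by
      refine DifferentiableOn.diffContOnCl ?_
      rw [closure_ball (0 : ℂ) one_ne_zero]
      exact hd.comp (by fun_prop) hmap
    have := abs_re_sub_le_of_kernel_bound hG hw (c := c) (ε := τ) (η := τ) ?_
    · simpa using this
    intro z hz
    have hzs : z ∈ sphere (0 : ℂ) 1 := by simpa using hz
    have hU : 0 ≤ (F (r * z)).re := hpos _ (hmap z (sphere_subset_closedBall hzs))
    rw [abs_mul, abs_of_nonneg hU]
    -- Near `1` the kernel is within `τ` of `c`; away from `1`, `Re F (r z)` is at most `τ / C`.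
    by_cases hzδ : dist z 1 < δ
    · have h1 := hPδ z hzs hzδ
      have : |((z + w) / (z - w)).re - c| ≤ τ := by
        simpa [Real.dist_eq, hcdef] using h1.le
      nlinarith
    · have hzd : dist ((r : ℂ) * z) z = 1 - r := by
        rw [dist_eq_norm, show (r : ℂ) * z - z = ((r - 1 : ℝ) : ℂ) * z by push_cast; ring,
          norm_mul, hz, Complex.norm_real, Real.norm_of_nonpos (by linarith)]
        ring
      have hF0 : (F z).re = 0 := hbd z hz (by rintro rfl; simp [hδ] at hzδ)
      have h1 := hu ((r : ℂ) * z)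
        ⟨ball_subset_closedBall (hmap z (sphere_subset_closedBall hzs)), by
          rw [mem_ball, not_lt]
          have := dist_triangle_left z 1 ((r : ℂ) * z)
          linarith [not_lt.1 hzδ]⟩ z
        ⟨sphere_subset_closedBall hzs, by rw [mem_ball, not_lt]; linarith [not_lt.1 hzδ]⟩
        (by rw [hzd]; exact hrρ)
      have h2 : (F (r * z)).re ≤ τ / C := by
        have := (Complex.abs_re_le_norm (F (r * z) - F z)).trans (dist_eq_norm (F (r*z)) (F z) ▸ h1.le)
        rw [Complex.sub_re, hF0, sub_zero] at this
        exact (le_abs_self _).trans this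
      have h3 : |((z + w) / (z - w)).re - c| ≤ C := (hC₀ z hzs).trans (le_max_left _ _)
      calc _ ≤ C * (τ / C) := mul_le_mul h3 h2 hU hC1.le
        _ = τ := by field_simp
        _ ≤ _ := by nlinarith
  have h0 : 0 ≤ (F 0).re := hpos 0 (by simp)
  have : |(F w).re - c * (F 0).re| ≤ 0 := by
    refine le_of_forall_pos_le_add fun ε hε => ?_
    have := key (ε / ((F 0).re + 1)) (by positivity)
    rw [zero_add]
    refine this.trans (le_of_eq ?_)
    field_simp
  exact sub_eq_zero.1 (abs_nonpos_iff.1 this)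

/-! ### Rigidity of the first component -/

/-- The only holomorphic self-map of the disc, continuous up to the boundary, that is unimodular on
the circle, takes the value `1` on the circle only at `1`, and fixes `1`, `i`, `-1`, is the
identity. Its Cayley transform is `l (1 + z) / (1 - z) + k` with `l` real, by the uniqueness of
the Poisson kernel, and the values at `-1` and `i` force `k = 0` and `l = 1`. -/
theorem eqOn_id_of_unimodular_boundary {h : ℂ → ℂ} (hh : DiffContOnCl ℂ h (ball 0 1))
    (hn : ∀ z : ℂ, ‖z‖ = 1 → ‖h z‖ = 1) (hone : ∀ z : ℂ, ‖z‖ = 1 → h z = 1 → z = 1)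
    (h1 : h 1 = 1) (hi : h I = I) (hm1 : h (-1) = -1) :
    ∀ z ∈ closedBall (0 : ℂ) 1, h z = z := by
  have hcl : closure (ball (0 : ℂ) 1) = closedBall 0 1 := closure_ball 0 one_ne_zero
  have hcont : ContinuousOn h (closedBall 0 1) := hh.continuousOn_ball
  have hle : ∀ z ∈ closedBall (0 : ℂ) 1, ‖h z‖ ≤ 1 := by
    intro z hz
    refine Complex.norm_le_of_forall_mem_frontier_norm_le isBounded_ball hh ?_ (hcl ▸ hz)
    intro x hx
    exact (hn x (by simpa [frontier_ball (0 : ℂ) one_ne_zero] using hx)).le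
  have hne_ball : ∀ z ∈ ball (0 : ℂ) 1, h z ≠ 1 := by
    intro z hz hz1
    have hmax : IsMaxOn (norm ∘ h) (ball (0 : ℂ) 1) z := by
      intro x hx
      simpa [hz1] using hle x (ball_subset_closedBall hx)
    have := Complex.eqOn_closure_of_isPreconnected_of_isMaxOn_norm
      (convex_ball (0 : ℂ) 1).isPreconnected isOpen_ball hh hz hmax
    have e := this (x := -1) (by rw [hcl]; simp)
    rw [hm1, Function.const_apply, hz1] at e
    norm_num at e
  have hne : ∀ z ∈ closedBall (0 : ℂ) 1 \ {1}, 1 - h z ≠ 0 := by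
    rintro z ⟨hz, hz1⟩ h0
    have h0 : h z = 1 := (sub_eq_zero.1 h0).symm
    rcases (mem_closedBall_zero_iff.1 hz).lt_or_eq with hlt | heq
    · exact hne_ball z (by simpa using hlt) h0
    · exact hz1 (hone z heq h0)
  have hre : ∀ x : ℂ, ((1 + x) / (1 - x)).re = (1 - ‖x‖ ^ 2) / normSq (1 - x) := by
    intro x
    rw [← Complex.normSq_eq_norm_sq, Complex.div_re, ← add_div]
    congr 1
    simp [Complex.normSq_apply]
    ring
  have hsub : ∀ z ∈ ball (0 : ℂ) 1, z ∈ closedBall (0 : ℂ) 1 \ {1} := by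
    intro z hz
    refine ⟨ball_subset_closedBall hz, ?_⟩
    rintro rfl
    simp at hz
  -- `F` is the Cayley transform of `h`: it maps the disc to the right half-plane, and the circle
  -- minus `1` to the imaginary axis. `Q` is the Cayley transform of the identity.
  set F : ℂ → ℂ := fun z => (1 + h z) / (1 - h z) with hF
  have hFd : DifferentiableOn ℂ F (ball 0 1) :=
    ((differentiableOn_const 1).add hh.differentiableOn).div
      ((differentiableOn_const 1).sub hh.differentiableOn) fun z hz => hne z (hsub z hz)
  have hc' := hcont.mono (Set.sdiff_subset (s := closedBall (0 : ℂ) 1) (t := {1}))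
  have hFc : ContinuousOn F (closedBall 0 1 \ {1}) :=
    (continuousOn_const.add hc').div (continuousOn_const.sub hc') hne
  have hP := fun w (hw : w ∈ ball (0 : ℂ) 1) => re_eq_mul_poisson_of_re_eq_zero_off_one hFd hFc
    (fun z hz => by
      have := hle z (ball_subset_closedBall hz)
      rw [hF]
      simp only [hre]
      exact div_nonneg (by nlinarith [norm_nonneg (h z)]) (normSq_nonneg _))
    (fun z hz _ => by simp only [hF, hre, hn z hz]; simp) hw
  set l : ℝ := (F 0).re with hl
  have hne' : ∀ z ∈ closedBall (0 : ℂ) 1 \ {1}, 1 - z ≠ 0 := fun z hz h0 =>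
    hz.2 (sub_eq_zero.1 h0).symm
  set Q : ℂ → ℂ := fun z => (1 + z) / (1 - z) with hQ
  have hQd : DifferentiableOn ℂ Q (ball 0 1) :=
    DifferentiableOn.div (by fun_prop) (by fun_prop) fun z hz => hne' z (hsub z hz)
  have hQc : ContinuousOn Q (closedBall 0 1 \ {1}) :=
    ContinuousOn.div (by fun_prop) (by fun_prop) hne'
  obtain ⟨k, hk⟩ := ((hFd.sub (hQd.const_mul (l : ℂ))).analyticOnNhd
    isOpen_ball).eq_const_of_re_eq_const (c₀ := 0) (fun z hz => by
      have := hP z hz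
      simp only [Pi.sub_apply, sub_re, re_ofReal_mul]
      rw [this, hQ]
      ring) isOpen_ball ⟨⟨0, by simp⟩, (convex_ball (0 : ℂ) 1).isPreconnected⟩
  have hk' : Set.EqOn (fun z => F z - l * Q z) (fun _ => k) (closedBall 0 1 \ {1}) :=
    Set.EqOn.of_subset_closure (s := ball 0 1) hk (hFc.sub (continuousOn_const.mul hQc))
      continuousOn_const hsub (by rw [hcl]; exact Set.sdiff_subset)
  -- `F = l Q + k` on the closed disc minus `1`; evaluate at `-1`, where `F` and `Q` vanish, and
  -- at `i`, where they agree.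
  have e1 : k = 0 := by
    have := hk' (x := -1) ⟨by simp, by norm_num⟩
    simp [hF, hQ, hm1] at this
    exact this.symm
  have hI1 : (1 : ℂ) - I ≠ 0 := fun h0 => by simpa using congrArg Complex.re h0
  have hI2 : (1 : ℂ) + I ≠ 0 := fun h0 => by simpa using congrArg Complex.re h0
  have e2 : (l : ℂ) = 1 := by
    have := hk' (x := I) ⟨by simp, fun h0 => by simpa using congrArg Complex.re h0⟩
    simp only [hF, hQ, hi, e1] at this
    have h3 : (1 + I) / (1 - I) ≠ 0 := div_ne_zero hI2 hI1
    have h4 : (1 - (l : ℂ)) * ((1 + I) / (1 - I)) = 0 := by rw [← this]; ring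
    rcases mul_eq_zero.1 h4 with h5 | h5
    · exact (sub_eq_zero.1 h5).symm
    · exact absurd h5 h3
  intro z hz
  by_cases hz1 : z = 1
  · rw [hz1, h1]
  have hz' : z ∈ closedBall (0 : ℂ) 1 \ {1} := ⟨hz, hz1⟩
  have e3 := hk' hz'
  simp only [hF, hQ, e1, e2, one_mul, sub_eq_zero] at e3
  rw [div_eq_div_iff (hne z hz') (hne' z hz')] at e3
  linear_combination (1 / 2) * e3

/-! ### Discs with boundary on the Lagrangian cylinder -/

theorem differentiable_psiCyl (m : ℕ) : Differentiable ℝ (psiCyl m) := by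
  have : psiCyl m = fun z => (z.1.re * z.1.re + z.1.im * z.1.im) / 4
      + (1 / 2) * ∑ j, (z.2 j).im ^ 2 := by
    funext z
    rw [psiCyl, Complex.normSq_apply]
  rw [this]
  fun_prop

/-- A `J`-holomorphic disc `u = (a, b, h₀, h₁, …, h_{n−1})` with boundary on the
Lagrangian cylinder `L^t`, whose `ℂ`-component is injective on the unit circle
and fixes `1`, `i` and `−1`, is one of the standard discs `u^t_{s,b₀}`. -/
theorem disc_with_standard_boundary_is_standard (m : ℕ) (t : Fin m → ℝ)
    (a b : ℂ → ℝ) (h₀ : ℂ → ℂ) (h' : ℂ → Fin m → ℂ)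
    (u : ℂ → ℝ × ℝ × (ℂ × (Fin m → ℂ)))
    (hu : ∀ w, u w = (a w, b w, (h₀ w, h' w)))
    (hcont : ContinuousOn u (closedBall (0 : ℂ) 1))
    (hJ : ∀ w ∈ ball (0 : ℂ) 1,
      DifferentiableAt ℝ u w ∧
      ∀ ζ : ℂ, fderiv ℝ u w (Complex.I * ζ) =
        Jcyl m (h₀ w, h' w) (fderiv ℝ u w ζ))
    (hbd : ∀ w : ℂ, ‖w‖ = 1 →
      a w = 0 ∧ ‖h₀ w‖ = 1 ∧ ∀ j, (h' w j).im = t j)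
    (hinj : Set.InjOn h₀ (sphere (0 : ℂ) 1))
    (h1 : h₀ 1 = 1) (hi : h₀ Complex.I = Complex.I) (hm1 : h₀ (-1) = -1) :
    ∃ (s : Fin m → ℝ) (b₀ : ℝ), ∀ w ∈ closedBall (0 : ℂ) 1,
      a w = (Complex.normSq w - 1) / 4 ∧
      b w = b₀ ∧
      h₀ w = w ∧
      ∀ j, h' w j = (s j : ℂ) + (t j : ℂ) * Complex.I := by
  obtain rfl : u = fun w => (a w, b w, (h₀ w, h' w)) := funext hu
  have hac : ContinuousOn a (closedBall 0 1) := hcont.fst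
  have hbc : ContinuousOn b (closedBall 0 1) := hcont.snd.fst
  have hhc : ContinuousOn (fun w => (h₀ w, h' w)) (closedBall 0 1) := hcont.snd.snd
  -- By real linearity, `Du (i) = J (Du (1))` already contains all the Cauchy-Riemann equations.
  have hcomp : ∀ w ∈ ball (0 : ℂ) 1, ∃ (α β : ℂ →L[ℝ] ℝ) (η : ℂ →L[ℝ] ℂ × (Fin m → ℂ)),
      HasFDerivAt a α w ∧ HasFDerivAt b β w ∧ HasFDerivAt (fun w => (h₀ w, h' w)) η w ∧
      α I = fderiv ℝ (psiCyl m) (h₀ w, h' w) (I • η 1) - β 1 ∧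
      β I = α 1 - fderiv ℝ (psiCyl m) (h₀ w, h' w) (η 1) ∧ η I = I • η 1 := by
    intro w hw
    obtain ⟨hd, hD⟩ := hJ w hw
    have hD := hD 1
    rw [mul_one] at hD
    refine ⟨_, _, _, hd.hasFDerivAt.fst, hd.hasFDerivAt.snd.fst, hd.hasFDerivAt.snd.snd,
      ?_, ?_, ?_⟩
    · exact congrArg (fun q => q.1) hD
    · exact congrArg (fun q => q.2.1) hD
    · exact congrArg (fun q => q.2.2) hD
  have hhol : DiffContOnCl ℂ (fun w => (h₀ w, h' w)) (ball 0 1) := by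
    refine DiffContOnCl.mk_ball (fun w hw => ?_) hhc
    obtain ⟨-, -, η, -, -, hη, -, -, hI⟩ := hcomp w hw
    refine (differentiableAt_complex_iff_differentiableAt_real.2
      ⟨hη.differentiableAt, ?_⟩).differentiableWithinAt
    rw [hη.fderiv, hI]
  have hh₀ : DiffContOnCl ℂ h₀ (ball 0 1) :=
    ⟨hhol.differentiableOn.fst, hhol.continuousOn.fst⟩
  have hh' : ∀ j, DiffContOnCl ℂ (fun w => h' w j) (ball 0 1) := fun j =>
    ⟨differentiableOn_pi.1 hhol.differentiableOn.snd j, continuousOn_pi.1 hhol.continuousOn.snd j⟩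
  have hid := eqOn_id_of_unimodular_boundary hh₀ (fun z hz => (hbd z hz).2.1)
    (fun z hz hz1 => hinj (by simpa using hz) (by simp) (hz1.trans h1.symm)) h1 hi hm1
  -- The real part of `-i h_j` is `Im h_j`, which is `t_j` on the circle.
  have hconst : ∀ j, ∃ s : ℝ, ∀ w ∈ closedBall (0 : ℂ) 1, h' w j = s + t j * I := by
    intro j
    obtain ⟨k, hk⟩ := eq_const_of_re_const_on_sphere (f := fun w => (-I) • h' w j) (c := t j)
      ((hh' j).const_smul (-I)) (fun z hz => by simp [(hbd z hz).2.2 j])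
    have hk2 : ∀ w ∈ closedBall (0 : ℂ) 1, h' w j = h' 1 j := by
      intro w hw
      have := (hk w hw).trans (hk 1 (by simp)).symm
      simpa using this
    refine ⟨(h' 1 j).re, fun w hw => ?_⟩
    rw [hk2 w hw, ← (hbd 1 (by simp)).2.2 j, re_add_im]
  choose s hs using hconst
  -- `(a - ψ ∘ h) + i b` is holomorphic: this is the content of the first two components of `J`.
  have hf : DiffContOnCl ℂ (fun w => ((a w - psiCyl m (h₀ w, h' w) : ℝ) : ℂ) + I * (b w : ℂ))
      (ball 0 1) := by
    refine DiffContOnCl.mk_ball (fun w hw => ?_) ?_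
    · obtain ⟨α, β, η, hα, hβ, hη, e1, e2, e3⟩ := hcomp w hw
      have hψ := ((differentiable_psiCyl m) (h₀ w, h' w)).hasFDerivAt
      have h4 := (ofRealCLM.hasFDerivAt.comp w (hα.sub (hψ.comp w hη))).add
        ((ofRealCLM.hasFDerivAt.comp w hβ).const_smul I)
      have h5 : HasFDerivAt
          (fun w => ((a w - psiCyl m (h₀ w, h' w) : ℝ) : ℂ) + I * (b w : ℂ)) _ w := h4
      refine (differentiableAt_complex_iff_differentiableAt_real.2
        ⟨h5.differentiableAt, ?_⟩).differentiableWithinAt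
      rw [h5.fderiv]
      simp only [add_apply, ContinuousLinearMap.comp_apply,
        sub_apply, smul_apply, ofRealCLM_apply,
        smul_eq_mul, e1, e2, e3]
      push_cast
      linear_combination (-(β 1 : ℂ)) * I_mul_I
    · have h3 : ContinuousOn (fun w => psiCyl m (h₀ w, h' w)) (closedBall 0 1) :=
        (differentiable_psiCyl m).continuous.comp_continuousOn hhc
      exact (continuous_ofReal.comp_continuousOn (hac.sub h3)).add
        (continuousOn_const.mul (continuous_ofReal.comp_continuousOn hbc))
  obtain ⟨k, hk⟩ := eq_const_of_re_const_on_sphere (c := -1 / 4 - (1 / 2) * ∑ j, t j ^ 2) hf (by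
    intro z hz
    obtain ⟨ha, hn, ht⟩ := hbd z hz
    rw [add_re, ofReal_re, re_mul_ofReal, I_re, zero_mul, add_zero]
    simp only [psiCyl, ha, ht, normSq_eq_norm_sq, hn]
    ring)
  refine ⟨s, k.im, fun w hw => ⟨?_, ?_, hid w hw, fun j => hs j w hw⟩⟩
  -- Comparing with the value at the boundary point `1` identifies the constant `a - ψ ∘ h`.
  · have e1 := congrArg re (hk w hw)
    have e2 := congrArg re (hk 1 (by simp))
    simp [psiCyl, hid w hw, hid 1 (by simp), hs _ w hw, hs _ 1 (by simp),
      (hbd 1 (by simp)).1] at e1 e2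
    linarith
  · have e1 := congrArg im (hk w hw)
    simpa using e1
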